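/- Universal approximation under the action of an unbounded operator, compact version (Theorem UAT_L(i)): let v ∈ C²(H) be such that Dv(x) ∈ D(L) for every x ∈ H and the map x ↦ L Dv(x) is continuous from H to H. Let K, K' ⊆ H be compact and assume the consistency condition sup_{x∈K} |⟨L(Dv(x) − P_d Dv(P_d x)), x⟩| → 0 as d → ∞. Then for every ε > 0 there exist d ∈ ℕ and f ∈ 𝒩_d such that the cylindrical function w_f satisfies sup_{x∈K} |v(x) − w_f(x)| < ε, sup_{x∈K} ‖Dv(x) − Dw_f(x)‖ < ε, sup_{x∈K, h∈K'} ‖(D²v(x) − D²w_f(x)) h‖ < ε, and in addition sup_{x∈K} |⟨L(Dv(x) − Dw_f(x)), x⟩| < ε. -/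

import Mathlib

open Filter Topology
open scoped RealInnerProductSpace

/-- The coordinate map `x ↦ (⟪e 0, x⟫, …, ⟪e (d-1), x⟫)` of a Hilbert space with respect to the
first `d` elements of a sequence `e`. -/
noncomputable def euclCoord {H : Type*} [NormedAddCommGroup H] [InnerProductSpace ℝ H]
    (e : ℕ → H) (d : ℕ) (x : H) : EuclideanSpace ℝ (Fin d) :=
  WithLp.toLp 2 fun i : Fin d => ⟪e i, x⟫

/-- The cylindrical function (Hilbert–Galerkin Neural Operator) with inner network `f`. -/
noncomputable def cyl {H : Type*} [NormedAddCommGroup H] [InnerProductSpace ℝ H]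
    (e : ℕ → H) {d : ℕ} (f : EuclideanSpace ℝ (Fin d) → ℝ) (x : H) : ℝ :=
  f (euclCoord e d x)

lemma small_of_tendsto {α E : Type*} [SeminormedAddCommGroup E] {l : Filter α} {F G : α → E}
    {z : E} {ε : ℝ} (hε : 0 < ε) (hF : Tendsto F l (𝓝 z)) (hG : Tendsto G l (𝓝 z)) :
    ∀ᶠ p in l, ‖F p - G p‖ < ε := by
  have h := (hF.sub hG).norm
  rw [sub_self, norm_zero] at h
  exact h.eventually_lt_const hε

lemma tendsto_clm_apply {α E : Type*} [NormedAddCommGroup E] [NormedSpace ℝ E] {l : Filter α}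
    {T : α → E →L[ℝ] E} {b : α → E} {S : E →L[ℝ] E} {x : E}
    (hT : Tendsto T l (𝓝 S)) (hb : Tendsto b l (𝓝 x)) :
    Tendsto (fun p => T p (b p)) l (𝓝 (S x)) :=
  ((isBoundedBilinearMap_apply (𝕜 := ℝ) (E := E) (F := E)).continuous.tendsto (S, x)).comp
    (hT.prodMk_nhds hb)

open ContinuousLinearMap in
lemma gradient_comp_clm {E F : Type*} [NormedAddCommGroup E] [InnerProductSpace ℝ E]
    [CompleteSpace E] [NormedAddCommGroup F] [InnerProductSpace ℝ F] [CompleteSpace F]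
    (A : E →L[ℝ] F) (g : F → ℝ) (hg : Differentiable ℝ g) :
    gradient (fun x => g (A x)) = fun x => adjoint A (gradient g (A x)) := by
  apply gradient_eq
  intro x
  rw [hasGradientAt_iff_hasFDerivAt]
  have h1 := (hg (A x)).hasGradientAt.hasFDerivAt
  have h2 := h1.comp x A.hasFDerivAt
  refine h2.congr_fderiv ?_
  ext k
  simp [adjoint_inner_left]

lemma contDiff_gradient {F : Type*} [NormedAddCommGroup F] [InnerProductSpace ℝ F]
    [CompleteSpace F] (g : F → ℝ) (hg : ContDiff ℝ 2 g) : ContDiff ℝ 1 (gradient g) := by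
  have h : ContDiff ℝ 1 (fderiv ℝ g) := hg.fderiv_right (by norm_num)
  exact ((InnerProductSpace.toDual ℝ F).symm.toContinuousLinearEquiv.contDiff).comp h

open ContinuousLinearMap in
lemma fderiv_gradient_comp_clm {E F : Type*} [NormedAddCommGroup E] [InnerProductSpace ℝ E]
    [CompleteSpace E] [NormedAddCommGroup F] [InnerProductSpace ℝ F] [CompleteSpace F]
    (A : E →L[ℝ] F) (g : F → ℝ) (hg : ContDiff ℝ 2 g) (x k : E) :
    fderiv ℝ (gradient (fun x => g (A x))) x k
      = adjoint A (fderiv ℝ (gradient g) (A x) (A k)) := by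
  rw [gradient_comp_clm A g (hg.differentiable (by norm_num))]
  have h1 : HasFDerivAt (gradient g) (fderiv ℝ (gradient g) (A x)) (A x) :=
    ((contDiff_gradient g hg).differentiable (by norm_num) (A x)).hasFDerivAt
  have h2 := ((adjoint A).hasFDerivAt (x := gradient g (A x))).comp x (h1.comp x A.hasFDerivAt)
  have h3 := h2.fderiv
  have h4 : (fun x => adjoint A (gradient g (A x))) = (adjoint A) ∘ (gradient g) ∘ A := rfl
  rw [h4, h3]
  rfl

lemma compact_eventually {X : Type*} [TopologicalSpace X] {K : Set X} (hK : IsCompact K)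
    (Q : ℕ → X → Prop) (h : ∀ x ∈ K, ∀ᶠ p in (atTop : Filter ℕ) ×ˢ 𝓝 x, Q p.1 p.2) :
    ∀ᶠ d in atTop, ∀ x ∈ K, Q d x := by
  simp only [← eventually_iSup, ← hK.prod_nhdsSet_eq_biSup] at h
  exact h.curry.mono fun d hd => hd.self_of_nhdsSet

/-- The embedding of Euclidean space along the first `d` vectors. -/
noncomputable def emb {H : Type*} [NormedAddCommGroup H] [InnerProductSpace ℝ H]
    (e : ℕ → H) (d : ℕ) : EuclideanSpace ℝ (Fin d) →L[ℝ] H :=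
  ∑ i : Fin d, (EuclideanSpace.proj i : EuclideanSpace ℝ (Fin d) →L[ℝ] ℝ).smulRight (e i)

lemma emb_apply {H : Type*} [NormedAddCommGroup H] [InnerProductSpace ℝ H]
    (e : ℕ → H) (d : ℕ) (y : EuclideanSpace ℝ (Fin d)) : emb e d y = ∑ i : Fin d, y i • e i := by
  simp [emb]

lemma adj_emb {H : Type*} [NormedAddCommGroup H] [InnerProductSpace ℝ H] [CompleteSpace H]
    (e : ℕ → H) (d : ℕ) (x : H) :
    ContinuousLinearMap.adjoint (emb e d) x = euclCoord e d x := by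
  apply ext_inner_left ℝ
  intro y
  rw [ContinuousLinearMap.adjoint_inner_right, emb_apply, sum_inner]
  simp [euclCoord, PiLp.inner_apply, inner_smul_left, mul_comm]

lemma proj_norm_le {H : Type*} [NormedAddCommGroup H] [InnerProductSpace ℝ H]
    (e : ℕ → H) (he : Orthonormal ℝ e) (d : ℕ) (x : H) :
    ‖∑ i ∈ Finset.range d, ⟪e i, x⟫ • e i‖ ≤ ‖x‖ := by
  have h1 := he.sum_inner_products_le (x := x) (s := Finset.range d)
  have h2 := he.inner_sum (fun i => ⟪e i, x⟫) (fun i => ⟪e i, x⟫) (Finset.range d)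
  rw [real_inner_self_eq_norm_sq] at h2
  refine le_of_sq_le_sq ?_ (norm_nonneg _)
  rw [h2]
  refine le_trans (le_of_eq ?_) h1
  refine Finset.sum_congr rfl fun i _ => ?_
  simp [sq]

lemma proj_tendsto {H : Type*} [NormedAddCommGroup H] [InnerProductSpace ℝ H] [CompleteSpace H]
    (e : ℕ → H) (he : Orthonormal ℝ e)
    (htot : Dense ((Submodule.span ℝ (Set.range e) : Submodule ℝ H) : Set H)) (x : H) :
    Tendsto (fun d => ∑ i ∈ Finset.range d, ⟪e i, x⟫ • e i) atTop (𝓝 x) := by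
  have hsp : ⊤ ≤ (Submodule.span ℝ (Set.range e)).topologicalClosure := by
    rw [Submodule.dense_iff_topologicalClosure_eq_top] at htot
    exact htot.ge
  have h := ((HilbertBasis.mk he hsp).hasSum_repr x).tendsto_sum_nat
  simpa [HilbertBasis.repr_apply_apply] using h

lemma proj_tendsto_joint {H : Type*} [NormedAddCommGroup H] [InnerProductSpace ℝ H]
    [CompleteSpace H] (e : ℕ → H) (he : Orthonormal ℝ e)
    (htot : Dense ((Submodule.span ℝ (Set.range e) : Submodule ℝ H) : Set H))
    (P : ℕ → H → H)
    (hP : ∀ (d : ℕ) (x : H), P d x = ∑ i ∈ Finset.range d, ⟪e i, x⟫ • e i)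
    {α : Type*} (l : Filter α) (a : α → ℕ) (b : α → H) (x : H)
    (ha : Tendsto a l atTop) (hb : Tendsto b l (𝓝 x)) :
    Tendsto (fun p => P (a p) (b p)) l (𝓝 x) := by
  have h1 : Tendsto (fun p => P (a p) x) l (𝓝 x) := by
    simp only [hP]
    exact (proj_tendsto e he htot x).comp ha
  have h2 : Tendsto (fun p => P (a p) (b p) - P (a p) x) l (𝓝 0) := by
    have h3 : Tendsto (fun p => ‖b p - x‖) l (𝓝 0) := by
      rw [← tendsto_iff_norm_sub_tendsto_zero]; exact hb
    refine squeeze_zero_norm (fun p => ?_) h3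
    have h4 := proj_norm_le e he (a p) (b p - x)
    simpa [hP, inner_sub_right, sub_smul, Finset.sum_sub_distrib] using h4
  simpa using h2.add h1

/-- universal approximation under the action of an unbounded operator, compact
version (Theorem UAT_L(i)).  The (possibly unbounded) closed densely defined operator is
represented by a linear map `L` together with its domain `Ldom`, a submodule containing each
basis vector `e i` on which the graph of `L` is closed and which is dense in `H`. -/
theorem hgno_universal_approximation_unbounded_compact
    {H : Type*} [NormedAddCommGroup H] [InnerProductSpace ℝ H] [CompleteSpace H]
    (e : ℕ → H) (he : Orthonormal ℝ e)
    (htot : Dense ((Submodule.span ℝ (Set.range e) : Submodule ℝ H) : Set H))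
    (P : ℕ → H → H)
    (hP : ∀ (d : ℕ) (x : H), P d x = ∑ i ∈ Finset.range d, ⟪e i, x⟫ • e i)
    (N : ∀ d : ℕ, Set (EuclideanSpace ℝ (Fin d) → ℝ))
    (hNsmooth : ∀ d : ℕ, ∀ f ∈ N d, ContDiff ℝ 2 f)
    (hNdense : ∀ (d : ℕ) (h : EuclideanSpace ℝ (Fin d) → ℝ), ContDiff ℝ 2 h →
      ∀ K : Set (EuclideanSpace ℝ (Fin d)), IsCompact K → ∀ ε > 0,
      ∃ f ∈ N d,
        (∀ y ∈ K, |h y - f y| < ε) ∧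
        (∀ y ∈ K, ‖gradient h y - gradient f y‖ < ε) ∧
        (∀ y ∈ K, ‖fderiv ℝ (gradient h) y - fderiv ℝ (gradient f) y‖ < ε))
    (L : H →ₗ[ℝ] H) (Ldom : Submodule ℝ H)
    (hLdense : Dense (Ldom : Set H))
    (hLclosed : IsClosed {p : H × H | p.1 ∈ Ldom ∧ p.2 = L p.1})
    (heL : ∀ i : ℕ, e i ∈ Ldom)
    (v : H → ℝ) (hv : ContDiff ℝ 2 v)
    (hDvdom : ∀ x : H, gradient v x ∈ Ldom)
    (hLDv : Continuous fun x : H => L (gradient v x))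
    (K K' : Set H) (hK : IsCompact K) (hK' : IsCompact K')
    (hcons : ∀ ε > 0, ∃ D : ℕ, ∀ d ≥ D, ∀ x ∈ K,
      |⟪L (gradient v x - P d (gradient v (P d x))), x⟫| < ε)
    (ε : ℝ) (hε : 0 < ε) :
    ∃ (d : ℕ) (f : EuclideanSpace ℝ (Fin d) → ℝ), f ∈ N d ∧
      (∀ x ∈ K, |v x - cyl e f x| < ε) ∧
      (∀ x ∈ K, ‖gradient v x - gradient (cyl e f) x‖ < ε) ∧
      (∀ x ∈ K, ∀ h ∈ K',
        ‖fderiv ℝ (gradient v) x h - fderiv ℝ (gradient (cyl e f)) x h‖ < ε) ∧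
      (∀ x ∈ K, |⟪L (gradient v x - gradient (cyl e f) x), x⟫| < ε) := by
  have hvg := contDiff_gradient v hv
  have hvc : Continuous v := hv.continuous
  have hgc : Continuous (gradient v) := hvg.continuous
  have hhc : Continuous (fderiv ℝ (gradient v)) := hvg.continuous_fderiv (by norm_num)
  have hPJ := fun {α : Type _} => @proj_tendsto_joint H _ _ _ e he htot P hP α
  have hε2 : 0 < ε / 2 := by positivity
  have E1 : ∀ᶠ d in atTop, ∀ x ∈ K, ‖v x - v (P d x)‖ < ε / 2 := by
    refine compact_eventually hK (fun d x => ‖v x - v (P d x)‖ < ε / 2) fun x _ => ?_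
    exact small_of_tendsto hε2 ((hvc.tendsto x).comp tendsto_snd)
      ((hvc.tendsto x).comp (hPJ _ _ _ x tendsto_fst tendsto_snd))
  have E2 : ∀ᶠ d in atTop, ∀ x ∈ K, ‖gradient v x - P d (gradient v (P d x))‖ < ε / 2 := by
    refine compact_eventually hK
      (fun d x => ‖gradient v x - P d (gradient v (P d x))‖ < ε / 2) fun x _ => ?_
    exact small_of_tendsto hε2 ((hgc.tendsto x).comp tendsto_snd)
      (hPJ _ _ _ _ tendsto_fst ((hgc.tendsto x).comp (hPJ _ _ _ x tendsto_fst tendsto_snd)))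
  have E3 : ∀ᶠ d in atTop, ∀ z ∈ K ×ˢ K', ‖fderiv ℝ (gradient v) z.1 z.2
      - P d (fderiv ℝ (gradient v) (P d z.1) (P d z.2))‖ < ε / 2 := by
    refine compact_eventually (hK.prod hK') (fun d z => ‖fderiv ℝ (gradient v) z.1 z.2
      - P d (fderiv ℝ (gradient v) (P d z.1) (P d z.2))‖ < ε / 2) fun z _ => ?_
    have t1 : Tendsto (fun p : ℕ × (H × H) => p.2.1) (atTop ×ˢ 𝓝 z) (𝓝 z.1) :=
      (continuous_fst.tendsto z).comp tendsto_snd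
    have t2 : Tendsto (fun p : ℕ × (H × H) => p.2.2) (atTop ×ˢ 𝓝 z) (𝓝 z.2) :=
      (continuous_snd.tendsto z).comp tendsto_snd
    exact small_of_tendsto hε2 (tendsto_clm_apply ((hhc.tendsto z.1).comp t1) t2)
      (hPJ _ _ _ _ tendsto_fst
        (tendsto_clm_apply ((hhc.tendsto z.1).comp (hPJ _ _ _ _ tendsto_fst t1))
          (hPJ _ _ _ _ tendsto_fst t2)))
  obtain ⟨D, hD⟩ := hcons (ε / 2) hε2
  obtain ⟨d, ⟨⟨h1, h2⟩, h3⟩, h4⟩ :=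
    (((E1.and E2).and E3).and (eventually_ge_atTop D)).exists
  replace h4 := hD d h4
  -- fixed dimension from here on
  obtain ⟨R, hR⟩ := hK.isBounded.exists_norm_le
  obtain ⟨R', hR'⟩ := hK'.isBounded.exists_norm_le
  set J := emb e d with hJ
  set A := ContinuousLinearMap.adjoint J with hA
  have hAJ : ∀ x, J (A x) = P d x := by
    intro x
    rw [hA, adj_emb, hJ, emb_apply, hP, Finset.sum_range]
    rfl
  have hAA : ContinuousLinearMap.adjoint A = J := by simp [hA]
  have hcyl : ∀ f : EuclideanSpace ℝ (Fin d) → ℝ, cyl e f = fun x => f (A x) := by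
    intro f
    funext x
    rw [hA, adj_emb]
    rfl
  set LJ : EuclideanSpace ℝ (Fin d) →L[ℝ] H :=
    LinearMap.toContinuousLinearMap (L ∘ₗ (J : EuclideanSpace ℝ (Fin d) →ₗ[ℝ] H)) with hLJ
  have hLJa : ∀ y, LJ y = L (J y) := fun y => rfl
  set M : ℝ := 1 + ‖J‖ + ‖LJ‖ * |R| + ‖J‖ * (‖A‖ * |R'|) with hM
  have hM1 : 0 ≤ ‖J‖ := norm_nonneg _
  have hM2 : 0 ≤ ‖LJ‖ * |R| := by positivity
  have hM3 : 0 ≤ ‖J‖ * (‖A‖ * |R'|) := by positivity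
  have hMpos : 0 < M := by linarith
  set δ : ℝ := ε / 2 / M with hδ
  have hδpos : 0 < δ := by positivity
  have hδM : δ * M = ε / 2 := by rw [hδ]; field_simp
  have hle : ∀ c, c ≤ M → δ * c ≤ ε / 2 := by
    intro c hc
    rw [← hδM]
    exact mul_le_mul_of_nonneg_left hc hδpos.le
  have hvJ : ContDiff ℝ 2 (fun y => v (J y)) := hv.comp J.contDiff
  obtain ⟨f, hf, g1, g2, g3⟩ := hNdense d (fun y => v (J y)) hvJ (Set.image A K)
    (hK.image A.continuous) δ hδpos
  have hf2 := hNsmooth d f hf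
  have G2 : ∀ x, gradient (cyl e f) x = J (gradient f (A x)) := by
    intro x
    rw [hcyl, gradient_comp_clm A f (hf2.differentiable (by norm_num)), hAA]
  have G3 : ∀ x k, fderiv ℝ (gradient (cyl e f)) x k
      = J (fderiv ℝ (gradient f) (A x) (A k)) := by
    intro x k
    rw [hcyl, fderiv_gradient_comp_clm A f hf2, hAA]
  have V2 : ∀ x, P d (gradient v (P d x)) = J (gradient (fun y => v (J y)) (A x)) := by
    intro x
    rw [gradient_comp_clm J v (hv.differentiable (by norm_num)), ← hA, hAJ, hAJ]
  have V3 : ∀ x k, P d (fderiv ℝ (gradient v) (P d x) (P d k))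
      = J (fderiv ℝ (gradient (fun y => v (J y))) (A x) (A k)) := by
    intro x k
    rw [fderiv_gradient_comp_clm J v hv, ← hA, hAJ, hAJ, hAJ]
  refine ⟨d, f, hf, fun x hx => ?_, fun x hx => ?_, fun x hx k hk => ?_, fun x hx => ?_⟩
  · have a1 := h1 x hx
    have a2 := g1 (A x) ⟨x, hx, rfl⟩
    simp only [hAJ] at a2
    rw [Real.norm_eq_abs] at a1
    have a3 := hle 1 (by linarith)
    rw [hcyl]
    have := abs_sub_le (v x) (v (P d x)) (f (A x))
    linarith
  · have a1 := h2 x hx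
    have a2 := g2 (A x) ⟨x, hx, rfl⟩
    rw [G2]
    have a3 : ‖P d (gradient v (P d x)) - J (gradient f (A x))‖ ≤ ε / 2 := by
      rw [V2, ← map_sub]
      refine (J.le_opNorm _).trans ?_
      rw [mul_comm]
      exact (mul_le_mul_of_nonneg_right a2.le hM1).trans (hle _ (by linarith))
    have := norm_sub_le_norm_sub_add_norm_sub (gradient v x) (P d (gradient v (P d x)))
      (J (gradient f (A x)))
    linarith
  · have a1 := h3 (x, k) ⟨hx, hk⟩
    simp only at a1
    have a2 := g3 (A x) ⟨x, hx, rfl⟩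
    rw [G3]
    have a3 : ‖P d (fderiv ℝ (gradient v) (P d x) (P d k))
        - J (fderiv ℝ (gradient f) (A x) (A k))‖ ≤ ε / 2 := by
      rw [V3, ← map_sub, ← sub_apply]
      refine (J.le_opNorm _).trans ?_
      have b1 : ‖A k‖ ≤ ‖A‖ * |R'| :=
        (A.le_opNorm k).trans (by gcongr; exact (hR' k hk).trans (le_abs_self _))
      have b2 := ContinuousLinearMap.le_of_opNorm_le_of_le _ a2.le b1
      calc _ ≤ ‖J‖ * (δ * (‖A‖ * |R'|)) := by gcongr
        _ = δ * (‖J‖ * (‖A‖ * |R'|)) := by ring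
        _ ≤ ε / 2 := hle _ (by linarith)
    have := norm_sub_le_norm_sub_add_norm_sub (fderiv ℝ (gradient v) x k)
      (P d (fderiv ℝ (gradient v) (P d x) (P d k))) (J (fderiv ℝ (gradient f) (A x) (A k)))
    linarith
  · have a1 := h4 x hx
    have a2 := g2 (A x) ⟨x, hx, rfl⟩
    rw [G2]
    have a3 : |⟪L (P d (gradient v (P d x)) - J (gradient f (A x))), x⟫| ≤ ε / 2 := by
      rw [V2, ← map_sub, ← hLJa]
      refine (abs_real_inner_le_norm _ _).trans ?_
      have b1 := LJ.le_opNorm_of_le a2.le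
      have b2 : ‖x‖ ≤ |R| := (hR x hx).trans (le_abs_self _)
      calc _ ≤ (‖LJ‖ * δ) * |R| := by gcongr
        _ = δ * (‖LJ‖ * |R|) := by ring
        _ ≤ ε / 2 := hle _ (by linarith)
    have a4 : L (gradient v x - J (gradient f (A x)))
        = L (gradient v x - P d (gradient v (P d x)))
          + L (P d (gradient v (P d x)) - J (gradient f (A x))) := by
      rw [← map_add]; congr 1; abel
    rw [a4, inner_add_left]
    have := abs_add_le ⟪L (gradient v x - P d (gradient v (P d x))), x⟫
      ⟪L (P d (gradient v (P d x)) - J (gradient f (A x))), x⟫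
    linarith
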